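/- Under the strongly convex assumptions (each f(·;z) is convex, each F_m is λ-strongly convex with λ > 0, and F(0) − F* ≤ Δ), there exist stepsizes η_r ≤ 1/(4H) and nonnegative averaging weights w_r such that the weighted average x̂ = (Σ_{r=1}^R w_r x_r)/(Σ_{r=1}^R w_r) of the Minibatch SGD iterates started from x_0 = 0 satisfies E[F(x̂)] − F* ≤ 128H‖x*‖²·exp(−λR/(8H)) + 72σ_*²/(λMKR); in particular, since λ‖x*‖²/2 ≤ Δ, E[F(x̂)] − F* ≤ c·((HΔ/λ)·exp(−λR/(8H)) + σ_*²/(λMKR)) for a universal constant c. -/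

import Mathlib

/-!
The analysis rests on a one-step inequality (`integral_norm_sq_step_le`). Writing the minibatch
gradient at `x_r` as its difference from the minibatch gradient at `x⋆`, plus the latter,
cocoercivity of smooth convex functions (`SmoothConvexWith.cocoercive`) bounds the first part by the
objective gap, while independence and `∇F(x⋆) = 0` bound the second by `σ⋆² / (MK)`. For
`η ≤ 1 / (4 H)` and strong convexity this gives
`𝔼‖x_{r+1} - x⋆‖² ≤ (1 - λη) 𝔼‖x_r - x⋆‖² - η 𝔼[F(x_r) - F⋆] + 2 η² σ⋆² / (MK)`.
Independence of `x_r` from the samples of round `r` is expressed on the product space by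
`map_prodMk_eq_prod` and `integral_le_of_forall_integral_le`.

For `R ≥ 2` the first half of the rounds uses `η = 1 / (4 H)`, which contracts the initial distance
exponentially, and the second half uses `η_r = 2 / (8 H + λ (r - T₁))`, which yields the `1 / R` rate
for the noise (`two_phase_bound`). Averaging with weights proportional to `1 / η_r` over the second
half and Jensen's inequality give the claim (`two_phase_expected_gap_le`). For `R = 1` the origin
itself satisfies the bound, by smoothness.

This needs the stochastic gradients at `x⋆` to be square-integrable, which the variance bound does
not guarantee, since the Bochner integral of a non-integrable function is zero. If square-integrability
fails on some machine, take only one nonzero step, the last one: the output then has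
infinite second moment, so by quadratic growth `F` of it is not integrable, contrary to the
integrability assumed of the output (`memLp_two_grad_of_integrable_last`).
-/

open MeasureTheory Finset
open scoped RealInnerProductSpace

namespace MinibatchSGD

/-! ### Smooth convex functions -/

section Deterministic

variable {E : Type*} [NormedAddCommGroup E] [InnerProductSpace ℝ E]

/-- `φ` is convex and `H`-smooth, with `g` playing the role of its gradient: the quadratic upper
model and the supporting hyperplane given by `g x` both hold at every `x`. Differentiability is
not presupposed; the two inequalities are all that is used of `g`. -/
structure SmoothConvexWith (H : ℝ) (φ : E → ℝ) (g : E → E) : Prop where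
  upper : ∀ x y, φ y ≤ φ x + ⟪g x, y - x⟫ + H / 2 * ‖x - y‖ ^ 2
  lower : ∀ x y, φ x + ⟪g x, y - x⟫ ≤ φ y

/-- The quadratic upper bound at `x - t • (y - x)`, combined with convexity along the line through
this point, `x` and `y`, gives the subgradient inequality as `t → 0`. -/
lemma SmoothConvexWith.of_convexOn {H : ℝ} (hH : 0 < H) {φ : E → ℝ} {g : E → E}
    (hupper : ∀ x y, φ y ≤ φ x + ⟪g x, y - x⟫ + H / 2 * ‖x - y‖ ^ 2)
    (hconv : ConvexOn ℝ Set.univ φ) : SmoothConvexWith H φ g := by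
  refine ⟨hupper, fun x y => ?_⟩
  have key : ∀ t : ℝ, 0 < t → φ x + ⟪g x, y - x⟫ ≤ φ y + t * (H / 2 * ‖x - y‖ ^ 2) := by
    intro t ht
    have h1 := hupper x (x - t • (y - x))
    have h2 := hconv.2 (Set.mem_univ y) (Set.mem_univ (x - t • (y - x)))
      (by positivity : (0 : ℝ) ≤ t / (1 + t)) (by positivity : (0 : ℝ) ≤ 1 / (1 + t))
      (by field_simp; ring)
    have e1 : (t / (1 + t)) • y + (1 / (1 + t)) • (x - t • (y - x)) = x := by
      have : (1 + t) ≠ 0 := by positivity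
      match_scalars <;> field_simp <;> ring
    have e2 : x - t • (y - x) - x = -(t • (y - x)) := by abel
    have e3 : x - (x - t • (y - x)) = t • (y - x) := by abel
    rw [e1, smul_eq_mul, smul_eq_mul] at h2
    rw [e2, e3, inner_neg_right, inner_smul_right, norm_smul, Real.norm_eq_abs, abs_of_pos ht,
      norm_sub_rev y x] at h1
    have h3 : (1 + t) * φ x ≤ t * φ y + φ (x - t • (y - x)) := by
      calc (1 + t) * φ x ≤ (1 + t) * (t / (1 + t) * φ y + 1 / (1 + t) * φ (x - t • (y - x))) := by
            gcongr
        _ = _ := by field_simp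
    have h4 : t * (φ x + ⟪g x, y - x⟫) ≤ t * (φ y + t * (H / 2 * ‖x - y‖ ^ 2)) := by
      nlinarith
    exact le_of_mul_le_mul_left h4 ht
  refine le_of_forall_pos_le_add fun ε hε => ?_
  set C := H / 2 * ‖x - y‖ ^ 2 with hC
  have hC0 : 0 ≤ C := by positivity
  refine (key (ε / (C + 1)) (by positivity)).trans ?_
  have : ε / (C + 1) * C ≤ ε := by
    rw [div_mul_eq_mul_div, div_le_iff₀ (by positivity)]
    nlinarith
  linarith

namespace SmoothConvexWith
variable {H : ℝ} {φ : E → ℝ} {g : E → E}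

/-- Squared gradient differences are controlled by the Bregman divergence of `φ`. This is what
lets the variance at the optimum stand in for the variance along the trajectory. -/
lemma cocoercive (h : SmoothConvexWith H φ g) (hH : 0 < H) (x y : E) :
    ‖g x - g y‖ ^ 2 ≤ 2 * H * (φ x - φ y - ⟪g y, x - y⟫) := by
  set v := g x - g y with hv
  have h1 := h.upper x (x - H⁻¹ • v)
  have h2 := h.lower y (x - H⁻¹ • v)
  have e1 : x - H⁻¹ • v - x = -(H⁻¹ • v) := by abel
  have e2 : x - (x - H⁻¹ • v) = H⁻¹ • v := by abel
  have e3 : x - H⁻¹ • v - y = (x - y) - H⁻¹ • v := by abel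
  rw [e1, e2, inner_neg_right, inner_smul_right, norm_smul, Real.norm_eq_abs,
    abs_of_pos (by positivity)] at h1
  rw [e3, inner_sub_right, inner_smul_right] at h2
  have h3 : ⟪g x, v⟫ - ⟪g y, v⟫ = ‖v‖ ^ 2 := by
    rw [← inner_sub_left, ← hv, real_inner_self_eq_norm_sq]
  have h4 : H⁻¹ * ‖v‖ ^ 2 - H / 2 * (H⁻¹ * ‖v‖) ^ 2 ≤ φ x - φ y - ⟪g y, x - y⟫ := by
    rw [show H⁻¹ * ‖v‖ ^ 2 = H⁻¹ * ⟪g x, v⟫ - H⁻¹ * ⟪g y, v⟫ by rw [← mul_sub, h3]]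
    linarith
  have h5 : ‖v‖ ^ 2 = 2 * H * (H⁻¹ * ‖v‖ ^ 2 - H / 2 * (H⁻¹ * ‖v‖) ^ 2) := by
    field_simp; ring
  rw [h5]
  gcongr

lemma lipschitz (h : SmoothConvexWith H φ g) (hH : 0 < H) (x y : E) :
    ‖g x - g y‖ ≤ H * ‖x - y‖ := by
  have h1 := h.cocoercive hH x y
  have h2 := h.cocoercive hH y x
  rw [norm_sub_rev] at h2
  have e1 : ⟪g x, y - x⟫ = -⟪g x, x - y⟫ := by
    rw [← inner_neg_right, neg_sub]
  have h3 : ‖g x - g y‖ ^ 2 ≤ H * ⟪g x - g y, x - y⟫ := by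
    rw [inner_sub_left]
    nlinarith
  have h4 := real_inner_le_norm (g x - g y) (x - y)
  by_contra! hlt
  have h5 : 0 ≤ ‖x - y‖ := norm_nonneg _
  have h6 : 0 < ‖g x - g y‖ := lt_of_le_of_lt (by positivity) hlt
  nlinarith [mul_le_mul_of_nonneg_left h4 hH.le]

lemma continuous_grad (h : SmoothConvexWith H φ g) (hH : 0 < H) : Continuous g :=
  (LipschitzWith.of_dist_le_mul (K := H.toNNReal) fun x y => by
    simpa [dist_eq_norm, hH.le] using h.lipschitz hH x y).continuous

lemma abs_sub_le (h : SmoothConvexWith H φ g) (hH : 0 < H) (x y : E) :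
    |φ y - φ x| ≤ ‖g x‖ * ‖y - x‖ + H / 2 * ‖y - x‖ ^ 2 := by
  have h1 := h.upper x y
  have h2 := h.lower x y
  have h3 := abs_le.1 (abs_real_inner_le_norm (g x) (y - x))
  rw [norm_sub_rev x y] at h1
  have : 0 ≤ H / 2 * ‖y - x‖ ^ 2 := by positivity
  rw [abs_le]
  constructor <;> linarith [h3.1, h3.2]

lemma continuous (h : SmoothConvexWith H φ g) (hH : 0 < H) : Continuous φ := by
  rw [continuous_iff_continuousAt]
  intro x
  rw [ContinuousAt, tendsto_iff_dist_tendsto_zero]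
  refine squeeze_zero (fun _ => dist_nonneg) (fun y => (h.abs_sub_le hH x y)) ?_
  have : Continuous fun y => ‖g x‖ * ‖y - x‖ + H / 2 * ‖y - x‖ ^ 2 := by fun_prop
  simpa using this.tendsto x

lemma grad_eq_zero_of_forall_le (h : SmoothConvexWith H φ g) (hH : 0 < H) {x : E}
    (hmin : ∀ y, φ x ≤ φ y) : g x = 0 := by
  have h1 := h.upper x (x - H⁻¹ • g x)
  have h2 := hmin (x - H⁻¹ • g x)
  have e1 : x - H⁻¹ • g x - x = -(H⁻¹ • g x) := by abel
  have e2 : x - (x - H⁻¹ • g x) = H⁻¹ • g x := by abel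
  rw [e1, e2, inner_neg_right, inner_smul_right, norm_smul, Real.norm_eq_abs,
    abs_of_pos (by positivity), real_inner_self_eq_norm_sq] at h1
  have e3 : H / 2 * (H⁻¹ * ‖g x‖) ^ 2 = H⁻¹ * ‖g x‖ ^ 2 / 2 := by field_simp
  have h3 : H⁻¹ * ‖g x‖ ^ 2 ≤ 0 := by linarith
  have h4 : 0 < H⁻¹ := by positivity
  have h5 : ‖g x‖ ^ 2 ≤ 0 := by nlinarith
  simpa using le_antisymm h5 (by positivity)

lemma mean {ι : Type*} [Fintype ι] [Nonempty ι] {φ : ι → E → ℝ} {g : ι → E → E}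
    (h : ∀ i, SmoothConvexWith H (φ i) (g i)) :
    SmoothConvexWith H (fun x => (Fintype.card ι : ℝ)⁻¹ * ∑ i, φ i x)
      (fun x => (Fintype.card ι : ℝ)⁻¹ • ∑ i, g i x) := by
  have hn : (0 : ℝ) < Fintype.card ι := by exact_mod_cast Fintype.card_pos
  constructor
  · intro x y
    have : ∑ i, φ i y ≤ ∑ i, φ i x + ∑ i, ⟪g i x, y - x⟫
        + Fintype.card ι * (H / 2 * ‖x - y‖ ^ 2) := by
      refine (sum_le_sum fun i _ => (h i).upper x y).trans_eq ?_
      simp [sum_add_distrib]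
    rw [inner_smul_left, sum_inner]
    calc _ ≤ (Fintype.card ι : ℝ)⁻¹ * (∑ i, φ i x + ∑ i, ⟪g i x, y - x⟫
        + Fintype.card ι * (H / 2 * ‖x - y‖ ^ 2)) := by gcongr
      _ = _ := by simp; field_simp
  · intro x y
    have : ∑ i, φ i x + ∑ i, ⟪g i x, y - x⟫ ≤ ∑ i, φ i y := by
      rw [← sum_add_distrib]
      exact sum_le_sum fun i _ => (h i).lower x y
    rw [inner_smul_left, sum_inner]
    calc _ = (Fintype.card ι : ℝ)⁻¹ * (∑ i, φ i x + ∑ i, ⟪g i x, y - x⟫) := by simp; ring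
      _ ≤ _ := by gcongr

lemma convexOn (h : SmoothConvexWith H φ g) : ConvexOn ℝ Set.univ φ := by
  refine ⟨convex_univ, fun x _ y _ a b ha hb hab => ?_⟩
  set u := a • x + b • y
  have h1 := h.lower u x
  have h2 := h.lower u y
  have e : a * ⟪g u, x - u⟫ + b * ⟪g u, y - u⟫ = 0 := by
    rw [← inner_smul_right, ← inner_smul_right, ← inner_add_right]
    have : a • (x - u) + b • (y - u) = 0 := by
      have : a • (x - u) + b • (y - u) = a • x + b • y - (a + b) • u := by module
      rw [this, hab, one_smul, sub_self]
    rw [this, inner_zero_right]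
  simp only [smul_eq_mul]
  have h3 : φ u = (a + b) * φ u := by rw [hab, one_mul]
  nlinarith [mul_le_mul_of_nonneg_left h1 ha, mul_le_mul_of_nonneg_left h2 hb]

end SmoothConvexWith

lemma norm_mean_sq_le {β : Type*} [Fintype β] [Nonempty β] (v : β → E) :
    ‖(Fintype.card β : ℝ)⁻¹ • ∑ b, v b‖ ^ 2 ≤ (Fintype.card β : ℝ)⁻¹ * ∑ b, ‖v b‖ ^ 2 := by
  have hn : (0 : ℝ) < Fintype.card β := by exact_mod_cast Fintype.card_pos
  rw [norm_smul, norm_inv, Real.norm_natCast, mul_pow]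
  have h1 : ‖∑ b, v b‖ ^ 2 ≤ Fintype.card β * ∑ b, ‖v b‖ ^ 2 := by
    refine le_trans ?_ (sq_sum_le_card_mul_sum_sq (s := univ) (f := fun b => ‖v b‖))
    gcongr
    exact norm_sum_le _ _
  calc _ ≤ ((Fintype.card β : ℝ)⁻¹) ^ 2 * (Fintype.card β * ∑ b, ‖v b‖ ^ 2) := by gcongr
    _ = _ := by field_simp

lemma integral_smoothConvexWith [CompleteSpace E] {Z : Type*} [MeasurableSpace Z]
    (ν : Measure Z) [IsProbabilityMeasure ν] {H : ℝ} {f : E → Z → ℝ} {G : E → Z → E}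
    (hf : ∀ z, SmoothConvexWith H (fun x => f x z) (fun x => G x z))
    (hfi : ∀ x, Integrable (f x) ν) (hGi : ∀ x, Integrable (G x) ν) :
    SmoothConvexWith H (fun x => ∫ z, f x z ∂ν) (fun x => ∫ z, G x z ∂ν) := by
  have e : ∀ x y, ⟪∫ z, G x z ∂ν, y - x⟫ = ∫ z, ⟪G x z, y - x⟫ ∂ν := fun x y => by
    rw [real_inner_comm, ← integral_inner (hGi x)]
    simp_rw [real_inner_comm]
  have hI : ∀ x y, Integrable (fun z => ⟪G x z, y - x⟫) ν := fun x y => (hGi x).inner_const _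
  have eadd : ∀ x y, ∫ z, (f x z + ⟪G x z, y - x⟫) ∂ν
      = ∫ z, f x z ∂ν + ⟪∫ z, G x z ∂ν, y - x⟫ := fun x y => by
    rw [integral_add (hfi x) (hI x y), e]
  constructor
  · intro x y
    have h := integral_mono (μ := ν) (hfi y)
      (((hfi x).add (hI x y)).add (integrable_const (H / 2 * ‖x - y‖ ^ 2)))
      (fun z => (hf z).upper x y)
    refine h.trans_eq ?_
    rw [← eadd]
    refine (integral_add ((hfi x).add (hI x y)) (integrable_const _)).trans ?_
    simp
  · intro x y
    have h := integral_mono (μ := ν) ((hfi x).add (hI x y)) (hfi y)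
      (fun z => (hf z).lower x y)
    exact (eadd x y).symm.trans_le h

end Deterministic

/-! ### Independence of a coordinate under a product measure -/

section Product
open ProbabilityTheory

variable {ι Z E : Type*} [Fintype ι] [DecidableEq ι] [MeasurableSpace Z] [MeasurableSpace E]
  (D : ι → Measure Z) [∀ i, IsProbabilityMeasure (D i)]

/-- If `X` does not depend on the coordinate `i`, then under the product measure the pair
`(X ω, ω i)` has the product law: `X` and the `i`-th sample are independent. -/
lemma map_prodMk_eq_prod {X : (ι → Z) → E} (hX : Measurable X) (i : ι)
    (hXi : ∀ ω z, X (Function.update ω i z) = X ω) :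
    (Measure.pi D).map (fun ω => (X ω, ω i)) = ((Measure.pi D).map X).prod (D i) := by
  have hind : iIndepFun (fun (j : ι) (ω : ι → Z) => ω j) (Measure.pi D) :=
    iIndepFun_pi (X := fun _ => id) fun j => aemeasurable_id
  obtain ⟨z₀⟩ : Nonempty Z := (D i).nonempty_of_neZero
  have h1 := hind.indepFun_finset (univ.erase i) {i} (by simp) fun j => measurable_pi_apply j
  -- `fill` completes a configuration off `i` with an arbitrary value at `i`, so that `X` becomes a
  -- function of the coordinates other than `i`.
  let fill : (↥(univ.erase i) → Z) → (ι → Z) := fun v j =>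
    if hj : j ∈ univ.erase i then v ⟨j, hj⟩ else z₀
  have hext : Measurable fill := by
    refine measurable_pi_lambda _ fun j => ?_
    by_cases hj : j ∈ univ.erase i
    · simpa only [fill, hj, dite_true] using measurable_pi_apply _
    · simp only [fill, hj, dite_false, measurable_const]
  have hev : Measurable fun v : ↥({i} : Finset ι) → Z => v ⟨i, mem_singleton_self i⟩ :=
    measurable_pi_apply _
  have h2 := h1.comp (hX.comp hext) hev
  have e1 : (X ∘ fill) ∘ (fun (ω : ι → Z) (j : ↥(univ.erase i)) => ω j) = X := by
    funext ω
    simp only [Function.comp]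
    rw [← hXi ω z₀]
    congr 1
    funext j
    by_cases hj : j = i
    · subst hj; simp [fill]
    · simp [fill, hj]
  rw [e1] at h2
  have h3 := (indepFun_iff_map_prod_eq_prod_map_map hX.aemeasurable
    (measurable_pi_apply i).aemeasurable).1 h2
  rw [← (measurePreserving_eval D i).map_eq]
  exact h3

/-- Substitute for conditioning on the past: a bound on the average over the fresh sample `ω i`,
valid for every frozen value `x` of `X`, integrates to a bound on the full expectation. -/
lemma integral_le_of_forall_integral_le {X : (ι → Z) → E} (hX : Measurable X) (i : ι)
    (hXi : ∀ ω z, X (Function.update ω i z) = X ω) {φ : E × Z → ℝ} (hφ : Measurable φ)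
    (hFint : Integrable (fun ω => φ (X ω, ω i)) (Measure.pi D)) {ψ : E → ℝ} (hψm : Measurable ψ)
    (hψ : Integrable (fun ω => ψ (X ω)) (Measure.pi D))
    (h : ∀ x, ∫ z, φ (x, z) ∂(D i) ≤ ψ x) :
    ∫ ω, φ (X ω, ω i) ∂(Measure.pi D) ≤ ∫ ω, ψ (X ω) ∂(Measure.pi D) := by
  have hm : Measurable fun ω : ι → Z => (X ω, ω i) := hX.prodMk (measurable_pi_apply i)
  have hlaw := map_prodMk_eq_prod D hX i hXi
  have hprob : IsProbabilityMeasure ((Measure.pi D).map X) :=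
    Measure.isProbabilityMeasure_map hX.aemeasurable
  have hi2 : Integrable φ (((Measure.pi D).map X).prod (D i)) := by
    rw [← hlaw]
    exact (integrable_map_measure hφ.aestronglyMeasurable hm.aemeasurable).2 hFint
  have e1 : ∫ ω, φ (X ω, ω i) ∂(Measure.pi D) = ∫ p, φ p ∂(((Measure.pi D).map X).prod (D i)) := by
    rw [← hlaw, integral_map hm.aemeasurable hφ.aestronglyMeasurable]
  have e2 : ∫ ω, ψ (X ω) ∂(Measure.pi D) = ∫ x, ψ x ∂((Measure.pi D).map X) := by
    rw [integral_map hX.aemeasurable hψm.aestronglyMeasurable]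
  rw [e1, e2, integral_prod _ hi2]
  refine integral_mono hi2.integral_prod_left ?_ h
  exact (integrable_map_measure hψm.aestronglyMeasurable hX.aemeasurable).2 hψ

end Product


/-! ### One minibatch step -/

section OneStep

lemma integrable_inner_of_memLp_two {Ω E : Type*} [NormedAddCommGroup E]
    [InnerProductSpace ℝ E] [MeasurableSpace Ω] {μ : Measure Ω} {u v : Ω → E}
    (hu : MemLp u 2 μ) (hv : MemLp v 2 μ) : Integrable (fun ω => ⟪u ω, v ω⟫) μ := by
  have h1 := (memLp_two_iff_integrable_sq_norm hu.1).1 hu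
  have h2 := (memLp_two_iff_integrable_sq_norm hv.1).1 hv
  refine (h1.add h2).mono' (hu.1.inner hv.1) (.of_forall fun ω => ?_)
  rw [Real.norm_eq_abs]
  refine (abs_real_inner_le_norm _ _).trans ?_
  simp only [Pi.add_apply]
  nlinarith [sq_nonneg (‖u ω‖ - ‖v ω‖), sq_nonneg ‖u ω‖, sq_nonneg ‖v ω‖]

lemma measurable_uncurry_grad {Z E : Type*} [MeasurableSpace Z] [NormedAddCommGroup E]
    [InnerProductSpace ℝ E] [MeasurableSpace E] [BorelSpace E] [SecondCountableTopology E]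
    {H : ℝ} (hH : 0 < H) {f : E → Z → ℝ} {G : E → Z → E}
    (hf : ∀ z, SmoothConvexWith H (fun x => f x z) (fun x => G x z))
    (hG : ∀ x, Measurable (G x)) : Measurable fun p : E × Z => G p.1 p.2 :=
  measurable_uncurry_of_continuous_of_measurable (u := G)
    (fun z => (hf z).continuous_grad hH) hG

variable {ι β Z E : Type*} [Fintype ι] [DecidableEq ι] [Fintype β] [Nonempty β]
  [MeasurableSpace Z] [NormedAddCommGroup E] [InnerProductSpace ℝ E] [MeasurableSpace E]
  [BorelSpace E] [SecondCountableTopology E] [CompleteSpace E]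
  (D : ι → Measure Z) [∀ i, IsProbabilityMeasure (D i)]

/-- The second moment of an average of independent vectors with individual variances at most `s`
is at most `s / n`, provided the means sum to zero (individually they need not vanish, which is
the heterogeneous situation at the optimum). -/
lemma integral_norm_mean_sq_le {e : β → ι} (he : Function.Injective e) {Y : β → Z → E}
    (hYm : ∀ b, Measurable (Y b)) (hY : ∀ b, MemLp (Y b) 2 (D (e b)))
    (hzero : ∑ b, ∫ z, Y b z ∂(D (e b)) = 0) {s : ℝ}
    (hvar : ∀ b, ∫ z, ‖Y b z - ∫ z, Y b z ∂(D (e b))‖ ^ 2 ∂(D (e b)) ≤ s) :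
    ∫ ω, ‖(Fintype.card β : ℝ)⁻¹ • ∑ b, Y b (ω (e b))‖ ^ 2 ∂(Measure.pi D)
      ≤ s / Fintype.card β := by
  classical
  have hn : (0 : ℝ) < Fintype.card β := by exact_mod_cast Fintype.card_pos
  set W : β → Z → E := fun b z => Y b z - ∫ z, Y b z ∂(D (e b)) with hW
  have hWm : ∀ b, Measurable (W b) := fun b => (hYm b).sub_const _
  have hWL : ∀ b, MemLp (W b) 2 (D (e b)) := fun b => (hY b).sub (memLp_const _)
  have hWΩ : ∀ b, MemLp (fun ω : ι → Z => W b (ω (e b))) 2 (Measure.pi D) := fun b =>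
    (hWL b).comp_measurePreserving (measurePreserving_eval D (e b))
  have hW0 : ∀ b, ∫ z, W b z ∂(D (e b)) = 0 := fun b => by
    simp only [hW]
    rw [integral_sub ((hY b).integrable (by norm_num)) (integrable_const _)]
    simp
  have hsum : ∀ ω : ι → Z, ∑ b, Y b (ω (e b)) = ∑ b, W b (ω (e b)) := fun ω => by
    simp only [hW, sum_sub_distrib, hzero, sub_zero]
  have hexp : ∀ ω : ι → Z, ‖(Fintype.card β : ℝ)⁻¹ • ∑ b, Y b (ω (e b))‖ ^ 2
      = ((Fintype.card β : ℝ)⁻¹) ^ 2 *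
        ∑ b, ∑ b', ⟪W b (ω (e b)), W b' (ω (e b'))⟫ := fun ω => by
    rw [hsum, norm_smul, mul_pow, norm_inv, Real.norm_natCast, ← real_inner_self_eq_norm_sq,
      sum_inner]
    simp_rw [inner_sum]
  have hII : ∀ b b', Integrable (fun ω : ι → Z => ⟪W b (ω (e b)), W b' (ω (e b'))⟫)
      (Measure.pi D) := fun b b' => integrable_inner_of_memLp_two (hWΩ b) (hWΩ b')
  have hcross : ∀ b b', ∫ ω : ι → Z, ⟪W b (ω (e b)), W b' (ω (e b'))⟫ ∂(Measure.pi D)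
      ≤ if b = b' then s else 0 := fun b b' => by
    split_ifs with hb
    · subst hb
      simp_rw [real_inner_self_eq_norm_sq]
      refine le_trans (le_of_eq ?_) (hvar b)
      exact integral_comp_eval (μ := D) (i := e b) (f := fun z => ‖W b z‖ ^ 2)
        ((hWm b).norm.pow_const 2).aestronglyMeasurable
    · have := integral_le_of_forall_integral_le D (X := fun ω : ι → Z => W b (ω (e b)))
        ((hWm b).comp (measurable_pi_apply _)) (e b')
        (fun ω z => by rw [Function.update_of_ne (fun h => hb (he h))])
        (φ := fun p => ⟪p.1, W b' p.2⟫)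
        (measurable_fst.inner ((hWm b').comp measurable_snd)) (hII b b')
        (ψ := fun _ => 0) measurable_const (integrable_zero _ _ _)
        (fun x => by
          rw [integral_inner ((hWL b').integrable (by norm_num)), hW0, inner_zero_right])
      simpa using this
  simp_rw [hexp]
  rw [integral_const_mul, integral_finsetSum _ fun b _ => integrable_finsetSum _ fun b' _ => hII b b']
  have : ∑ b, ∫ ω : ι → Z, ∑ b', ⟪W b (ω (e b)), W b' (ω (e b'))⟫ ∂(Measure.pi D)
      ≤ Fintype.card β * s := by
    calc _ = ∑ b, ∑ b', ∫ ω : ι → Z, ⟪W b (ω (e b)), W b' (ω (e b'))⟫ ∂(Measure.pi D) :=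
          sum_congr rfl fun b _ => integral_finsetSum _ fun b' _ => hII b b'
      _ ≤ ∑ b : β, ∑ b', if b = b' then s else 0 :=
          sum_le_sum fun b _ => sum_le_sum fun b' _ => hcross b b'
      _ = _ := by simp
  calc _ ≤ ((Fintype.card β : ℝ)⁻¹) ^ 2 * (Fintype.card β * s) := by gcongr
    _ = _ := by field_simp

/-- One-step inequality: for `η ≤ 1 / (4 H)`, a minibatch step from `X`, which does not depend on the
fresh samples, satisfies
`𝔼‖X⁺ - x⋆‖² ≤ (1 - λη) 𝔼‖X - x⋆‖² - η 𝔼[F(X) - F(x⋆)] + (2σ²/n) η²`.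
Square-integrability propagates from `X` to `X⁺`, because only the gradient at `x⋆` needs a second
moment; the rest is Lipschitz in `X - x⋆`. -/
lemma integral_norm_sq_step_le {H lam σ η : ℝ} (hH : 0 < H) (hη0 : 0 ≤ η) (hη : η ≤ 1 / (4 * H))
    {f : E → Z → ℝ} {G : E → Z → E}
    (hf : ∀ z, SmoothConvexWith H (fun x => f x z) (fun x => G x z))
    (hG : ∀ x, Measurable (G x)) {e : β → ι} (he : Function.Injective e)
    (hfi : ∀ b x, Integrable (f x) (D (e b)))
    (hGi : ∀ b x, Integrable (G x) (D (e b))) (xs : E)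
    (hGs : ∀ b, MemLp (G xs) 2 (D (e b)))
    (hsc : ∀ b x, ∫ z, f x z ∂(D (e b)) + ⟪∫ z, G x z ∂(D (e b)), xs - x⟫ + lam / 2 * ‖x - xs‖ ^ 2
      ≤ ∫ z, f xs z ∂(D (e b)))
    (hzero : ∑ b, ∫ z, G xs z ∂(D (e b)) = 0)
    (hvar : ∀ b, ∫ z, ‖G xs z - ∫ z, G xs z ∂(D (e b))‖ ^ 2 ∂(D (e b)) ≤ σ ^ 2)
    {X : (ι → Z) → E} (hX : Measurable X) (hXL : MemLp X 2 (Measure.pi D))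
    (hXe : ∀ b ω z, X (Function.update ω (e b) z) = X ω) :
    MemLp (fun ω => X ω - η • ((Fintype.card β : ℝ)⁻¹ • ∑ b, G (X ω) (ω (e b)))) 2 (Measure.pi D) ∧
    ∫ ω, ‖X ω - η • ((Fintype.card β : ℝ)⁻¹ • ∑ b, G (X ω) (ω (e b))) - xs‖ ^ 2 ∂(Measure.pi D)
      ≤ (1 - lam * η) * ∫ ω, ‖X ω - xs‖ ^ 2 ∂(Measure.pi D)
        - η * ∫ ω, ((Fintype.card β : ℝ)⁻¹ * ∑ b, ∫ z, f (X ω) z ∂(D (e b))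
            - (Fintype.card β : ℝ)⁻¹ * ∑ b, ∫ z, f xs z ∂(D (e b))) ∂(Measure.pi D)
        + 2 * σ ^ 2 / Fintype.card β * η ^ 2 := by
  have hn : (0 : ℝ) < Fintype.card β := by exact_mod_cast Fintype.card_pos
  set n : ℝ := (Fintype.card β : ℝ) with hn_def
  set μ := Measure.pi D with hμ
  have hGu := measurable_uncurry_grad hH hf hG
  let Φ : β → E → ℝ := fun b x => ∫ z, f x z ∂(D (e b))
  let γ : β → E → E := fun b x => ∫ z, G x z ∂(D (e b))
  have hΦ : ∀ b, SmoothConvexWith H (Φ b) (γ b) := fun b =>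
    integral_smoothConvexWith (D (e b)) hf (hfi b) (hGi b)
  let U : (ι → Z) → E := fun ω => X ω - xs
  have hUL : MemLp U 2 μ := hXL.sub (memLp_const _)
  have hU2 : Integrable (fun ω => ‖U ω‖ ^ 2) μ := (memLp_two_iff_integrable_sq_norm hUL.1).1 hUL
  have hUm : Measurable U := hX.sub_const _
  have hYm : ∀ b, Measurable fun ω : ι → Z => G (X ω) (ω (e b)) := fun b =>
    hGu.comp (hX.prodMk (measurable_pi_apply _))
  have hSL : ∀ b, MemLp (fun ω : ι → Z => G xs (ω (e b))) 2 μ := fun b =>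
    (hGs b).comp_measurePreserving (measurePreserving_eval D (e b))
  have hDL : ∀ b, MemLp (fun ω : ι → Z => G (X ω) (ω (e b)) - G xs (ω (e b))) 2 μ := fun b =>
    (hUL.const_smul H).mono ((hYm b).aestronglyMeasurable.sub (hSL b).1)
      (.of_forall fun ω => by
        simpa [norm_smul, abs_of_pos hH, U] using (hf (ω (e b))).lipschitz hH (X ω) xs)
  have hYL : ∀ b, MemLp (fun ω : ι → Z => G (X ω) (ω (e b))) 2 μ := fun b => by
    exact ((hDL b).add (hSL b)).ae_eq (.of_forall fun ω => by simp)
  have hsumL : MemLp (fun ω : ι → Z => n⁻¹ • ∑ b, G xs (ω (e b))) 2 μ :=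
    (memLp_finsetSum _ fun b _ => hSL b).const_smul _
  have hnewL : MemLp (fun ω => X ω - η • (n⁻¹ • ∑ b, G (X ω) (ω (e b)))) 2 μ :=
    hXL.sub (((memLp_finsetSum _ fun b _ => hYL b).const_smul n⁻¹).const_smul η)
  refine ⟨hnewL, ?_⟩
  -- integrability of the objective gaps and of the linear terms
  have hΦi : ∀ b, Integrable (fun ω => Φ b (X ω) - Φ b xs) μ := fun b => by
    refine ((((hUL.norm.integrable (by norm_num)).const_mul ‖γ b xs‖).add (hU2.const_mul (H / 2)))).mono'
      ((((hΦ b).continuous hH).measurable.comp hX).sub_const _).aestronglyMeasurable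
      (.of_forall fun ω => ?_)
    exact (hΦ b).abs_sub_le hH xs (X ω)
  have hli : ∀ b, Integrable (fun ω => ⟪γ b xs, U ω⟫) μ := fun b =>
    (hUL.integrable (by norm_num)).const_inner _
  have hIi : ∀ b, Integrable (fun ω : ι → Z => ⟪G (X ω) (ω (e b)), U ω⟫) μ := fun b =>
    integrable_inner_of_memLp_two (hYL b) hUL
  have hNi : ∀ b, Integrable (fun ω : ι → Z => -⟪G (X ω) (ω (e b)), U ω⟫) μ := fun b =>
    (hIi b).neg
  have hNΦ : ∀ b, Integrable (fun ω => -(Φ b (X ω) - Φ b xs)) μ := fun b => (hΦi b).neg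
  have hDi : ∀ b, Integrable (fun ω : ι → Z => ‖G (X ω) (ω (e b)) - G xs (ω (e b))‖ ^ 2) μ :=
    fun b => (memLp_two_iff_integrable_sq_norm (hDL b).1).1 (hDL b)
  have hSi : Integrable (fun ω : ι → Z => ‖n⁻¹ • ∑ b, G xs (ω (e b))‖ ^ 2) μ :=
    (memLp_two_iff_integrable_sq_norm hsumL.1).1 hsumL
  -- Three moment estimates: `hA` from strong convexity, `hB` from cocoercivity at `xs`, and `hC` from
  -- the variance at `xs`.
  have hA : ∀ b, ∫ ω, -⟪G (X ω) (ω (e b)), U ω⟫ ∂μ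
      ≤ ∫ ω, (-(Φ b (X ω) - Φ b xs) - lam / 2 * ‖U ω‖ ^ 2) ∂μ := fun b => by
    refine integral_le_of_forall_integral_le D hX (e b) (hXe b)
      (φ := fun p => -⟪G p.1 p.2, p.1 - xs⟫) (hGu.inner (measurable_fst.sub_const _)).neg
      (hIi b).neg (ψ := fun x => -(Φ b x - Φ b xs) - lam / 2 * ‖x - xs‖ ^ 2) ?_
      ((hΦi b).neg.sub (hU2.const_mul _)) fun x => ?_
    · have := ((hΦ b).continuous hH).measurable
      fun_prop
    · have h1 := hsc b x
      have h2 : ∀ z, -⟪G x z, x - xs⟫ = ⟪xs - x, G x z⟫ := fun z => by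
        rw [real_inner_comm, ← inner_neg_left, neg_sub]
      simp only [h2]
      rw [integral_inner (hGi b x), real_inner_comm]
      simp only [Φ]
      linarith
  have hB : ∀ b, ∫ ω, ‖G (X ω) (ω (e b)) - G xs (ω (e b))‖ ^ 2 ∂μ
      ≤ ∫ ω, 2 * H * (Φ b (X ω) - Φ b xs - ⟪γ b xs, U ω⟫) ∂μ := fun b => by
    refine integral_le_of_forall_integral_le D hX (e b) (hXe b)
      (φ := fun p => ‖G p.1 p.2 - G xs p.2‖ ^ 2)
      ((hGu.sub ((hG xs).comp measurable_snd)).norm.pow_const 2)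
      (hDi b) (ψ := fun x => 2 * H * (Φ b x - Φ b xs - ⟪γ b xs, x - xs⟫)) ?_
      (((hΦi b).sub (hli b)).const_mul _) fun x => ?_
    · have := ((hΦ b).continuous hH).measurable
      fun_prop
    · have hI1 : Integrable (fun z => f x z - f xs z) (D (e b)) := (hfi b x).sub (hfi b xs)
      have hI2 : Integrable (fun z => ⟪x - xs, G xs z⟫) (D (e b)) := (hGi b xs).const_inner _
      have h1 : ∫ z, 2 * H * (f x z - f xs z - ⟪x - xs, G xs z⟫) ∂(D (e b))
          = 2 * H * (Φ b x - Φ b xs - ⟪γ b xs, x - xs⟫) := by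
        rw [integral_const_mul, integral_sub hI1 hI2, integral_sub (hfi b x) (hfi b xs),
          integral_inner (hGi b xs), real_inner_comm]
      rw [← h1]
      refine integral_mono_of_nonneg (.of_forall fun z => by positivity)
        ((hI1.sub hI2).const_mul _) (.of_forall fun z => ?_)
      have := (hf z).cocoercive hH x xs
      simp only
      rw [real_inner_comm]
      exact this
  have hC : ∫ ω, ‖n⁻¹ • ∑ b, G xs (ω (e b))‖ ^ 2 ∂μ ≤ σ ^ 2 / n :=
    integral_norm_mean_sq_le D he (Y := fun _ => G xs) (fun _ => hG xs) hGs hzero hvar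
  -- The stochastic gradient at `X` is split as its difference from the one at `xs`, plus the latter.
  have hpt : ∀ ω : ι → Z, ‖X ω - η • (n⁻¹ • ∑ b, G (X ω) (ω (e b))) - xs‖ ^ 2
      ≤ ‖U ω‖ ^ 2 + 2 * η * (n⁻¹ * ∑ b, -⟪G (X ω) (ω (e b)), U ω⟫)
        + 2 * η ^ 2 * (n⁻¹ * ∑ b, ‖G (X ω) (ω (e b)) - G xs (ω (e b))‖ ^ 2)
        + 2 * η ^ 2 * ‖n⁻¹ • ∑ b, G xs (ω (e b))‖ ^ 2 := fun ω => by
    set g := n⁻¹ • ∑ b, G (X ω) (ω (e b)) with hg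
    set g' := n⁻¹ • ∑ b, G xs (ω (e b)) with hg'
    have e1 : X ω - η • g - xs = U ω - η • g := by simp only [U]; abel
    have e2 : ⟪U ω, g⟫ = n⁻¹ * ∑ b, ⟪G (X ω) (ω (e b)), U ω⟫ := by
      rw [hg, inner_smul_right, inner_sum]
      simp_rw [real_inner_comm]
    have e3 : ‖g - g'‖ ^ 2 ≤ n⁻¹ * ∑ b, ‖G (X ω) (ω (e b)) - G xs (ω (e b))‖ ^ 2 := by
      have := norm_mean_sq_le (fun b => G (X ω) (ω (e b)) - G xs (ω (e b)))
      rwa [sum_sub_distrib, smul_sub] at this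
    have e4 : ‖g‖ ^ 2 ≤ 2 * ‖g - g'‖ ^ 2 + 2 * ‖g'‖ ^ 2 := by
      have h1 : ‖g‖ ≤ ‖g - g'‖ + ‖g'‖ := by simpa using norm_add_le (g - g') g'
      nlinarith [sq_nonneg (‖g - g'‖ - ‖g'‖), norm_nonneg g]
    rw [e1, norm_sub_sq_real, inner_smul_right, norm_smul, mul_pow, Real.norm_eq_abs, sq_abs, e2,
      sum_neg_distrib]
    have e5 : η ^ 2 * ‖g‖ ^ 2 ≤ η ^ 2 * (2 * (n⁻¹ * ∑ b, ‖G (X ω) (ω (e b)) - G xs (ω (e b))‖ ^ 2)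
        + 2 * ‖g'‖ ^ 2) := by gcongr; linarith
    linarith
  have hIA : Integrable (fun ω : ι → Z => 2 * η * (n⁻¹ * ∑ b, -⟪G (X ω) (ω (e b)), U ω⟫)) μ :=
    ((integrable_finsetSum _ fun b _ => hNi b).const_mul _).const_mul _
  have hIB : Integrable (fun ω : ι → Z => 2 * η ^ 2 *
      (n⁻¹ * ∑ b, ‖G (X ω) (ω (e b)) - G xs (ω (e b))‖ ^ 2)) μ :=
    ((integrable_finsetSum _ fun b _ => hDi b).const_mul _).const_mul _
  have hIC : Integrable (fun ω : ι → Z => 2 * η ^ 2 * ‖n⁻¹ • ∑ b, G xs (ω (e b))‖ ^ 2) μ :=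
    hSi.const_mul _
  have hmain : ∫ ω, ‖X ω - η • (n⁻¹ • ∑ b, G (X ω) (ω (e b))) - xs‖ ^ 2 ∂μ
      ≤ ∫ ω, ‖U ω‖ ^ 2 ∂μ + 2 * η * (n⁻¹ * ∑ b, ∫ ω, -⟪G (X ω) (ω (e b)), U ω⟫ ∂μ)
        + 2 * η ^ 2 * (n⁻¹ * ∑ b, ∫ ω, ‖G (X ω) (ω (e b)) - G xs (ω (e b))‖ ^ 2 ∂μ)
        + 2 * η ^ 2 * ∫ ω, ‖n⁻¹ • ∑ b, G xs (ω (e b))‖ ^ 2 ∂μ := by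
    refine (integral_mono_of_nonneg (.of_forall fun ω => by positivity)
      (((hU2.add hIA).add hIB).add hIC) (.of_forall hpt)).trans_eq ?_
    rw [integral_add' ((hU2.add hIA).add hIB) hIC, integral_add' (hU2.add hIA) hIB,
      integral_add' hU2 hIA, integral_const_mul, integral_const_mul, integral_const_mul,
      integral_const_mul, integral_const_mul, integral_finsetSum _ fun b _ => hNi b,
      integral_finsetSum _ fun b _ => hDi b]
  set I := ∫ ω, ‖U ω‖ ^ 2 ∂μ with hI
  set J : β → ℝ := fun b => ∫ ω, (Φ b (X ω) - Φ b xs) ∂μ with hJ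
  set L : β → ℝ := fun b => ∫ ω, ⟪γ b xs, U ω⟫ ∂μ with hL
  have hA' : ∀ b, ∫ ω, -⟪G (X ω) (ω (e b)), U ω⟫ ∂μ ≤ -J b - lam / 2 * I := fun b => by
    refine (hA b).trans_eq ?_
    rw [integral_sub (hNΦ b) (hU2.const_mul _), integral_neg, integral_const_mul]
  have hB' : ∀ b, ∫ ω, ‖G (X ω) (ω (e b)) - G xs (ω (e b))‖ ^ 2 ∂μ ≤ 2 * H * (J b - L b) :=
    fun b => by
    refine (hB b).trans_eq ?_
    rw [integral_const_mul, integral_sub (hΦi b) (hli b)]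
  have hLsum : ∑ b, L b = 0 := by
    rw [hL, ← integral_finsetSum _ fun b _ => hli b]
    simp_rw [← sum_inner]
    simp only [γ, hzero, inner_zero_left, integral_zero]
  have hJsum : ∫ ω, (n⁻¹ * ∑ b, Φ b (X ω) - n⁻¹ * ∑ b, Φ b xs) ∂μ = n⁻¹ * ∑ b, J b := by
    rw [← integral_finsetSum _ fun b _ => hΦi b, ← integral_const_mul]
    simp_rw [sum_sub_distrib, mul_sub]
  have hJ0 : 0 ≤ n⁻¹ * ∑ b, J b := by
    have : 0 ≤ ∑ b, (J b - L b) := sum_nonneg fun b _ => by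
      have h1 : 0 ≤ 2 * H * (J b - L b) :=
        (integral_nonneg fun ω => by positivity).trans (hB' b)
      exact nonneg_of_mul_nonneg_right h1 (by positivity)
    rw [sum_sub_distrib, hLsum, sub_zero] at this
    positivity
  have hsA : n⁻¹ * ∑ b, ∫ ω, -⟪G (X ω) (ω (e b)), U ω⟫ ∂μ ≤ -(n⁻¹ * ∑ b, J b) - lam / 2 * I := by
    calc _ ≤ n⁻¹ * ∑ b, (-J b - lam / 2 * I) := by gcongr with b; exact hA' b
      _ = _ := by
        rw [sum_sub_distrib, sum_neg_distrib, sum_const, card_univ, nsmul_eq_mul, ← hn_def]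
        field_simp
  have hsB : n⁻¹ * ∑ b, ∫ ω, ‖G (X ω) (ω (e b)) - G xs (ω (e b))‖ ^ 2 ∂μ
      ≤ 2 * H * (n⁻¹ * ∑ b, J b) := by
    calc _ ≤ n⁻¹ * ∑ b, 2 * H * (J b - L b) := by gcongr with b; exact hB' b
      _ = _ := by
        rw [← mul_sum, sum_sub_distrib, hLsum]; ring
  change _ ≤ (1 - lam * η) * I - η * ∫ ω, (n⁻¹ * ∑ b, Φ b (X ω) - n⁻¹ * ∑ b, Φ b xs) ∂μ + _
  rw [hJsum]
  set Q := n⁻¹ * ∑ b, J b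
  have hη' : 4 * H * η ≤ 1 := by
    rw [le_div_iff₀ (by positivity)] at hη
    linarith
  have t1 := mul_le_mul_of_nonneg_left hsA (by positivity : 0 ≤ 2 * η)
  have t2 := mul_le_mul_of_nonneg_left hsB (by positivity : 0 ≤ 2 * η ^ 2)
  have t3 := mul_le_mul_of_nonneg_left hC (by positivity : 0 ≤ 2 * η ^ 2)
  have t4 : 4 * H * η ^ 2 * Q ≤ η * Q := by
    have : 0 ≤ η * Q := by positivity
    nlinarith [mul_le_mul_of_nonneg_right hη' this]
  have t5 : 2 * σ ^ 2 / n * η ^ 2 = 2 * η ^ 2 * (σ ^ 2 / n) := by ring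
  rw [t5]
  linarith

end OneStep

/-! ### Second moments from sums of independent terms -/

section SecondMoment

variable {ι β Z E : Type*} [Fintype ι] [DecidableEq ι] [Fintype β]
  [MeasurableSpace Z] [NormedAddCommGroup E] [MeasurableSpace E]
  [BorelSpace E] [SecondCountableTopology E]
  (D : ι → Measure Z) [∀ i, IsProbabilityMeasure (D i)]

/-- If a sum of independent terms is square-integrable, so is each term: by Fubini, almost every
value of the sum of the other terms leaves a square-integrable translate of the chosen term. -/
lemma memLp_two_of_memLp_two_sum {e : β → ι} (he : Function.Injective e) {Y : Z → E}
    (hY : Measurable Y) (hS : MemLp (fun ω : ι → Z => ∑ b, Y (ω (e b))) 2 (Measure.pi D))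
    (b₀ : β) : MemLp Y 2 (D (e b₀)) := by
  classical
  set P : (ι → Z) → E := fun ω => ∑ b ∈ univ.erase b₀, Y (ω (e b)) with hP
  have hPm : Measurable P := by
    refine Finset.measurable_fun_sum _ fun b _ => ?_
    exact hY.comp (measurable_pi_apply _)
  have hPi : ∀ ω z, P (Function.update ω (e b₀) z) = P ω := fun ω z => by
    refine sum_congr rfl fun b hb => ?_
    rw [Function.update_of_ne fun h => (mem_erase.1 hb).1 (he h)]
  have hφ : Measurable fun p : E × Z => ‖p.1 + Y p.2‖ ^ 2 := by fun_prop
  have hm : Measurable fun ω : ι → Z => (P ω, ω (e b₀)) := hPm.prodMk (measurable_pi_apply _)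
  have hlaw := map_prodMk_eq_prod D hPm (e b₀) hPi
  have hprob : IsProbabilityMeasure ((Measure.pi D).map P) :=
    Measure.isProbabilityMeasure_map hPm.aemeasurable
  have h1 : Integrable (fun ω : ι → Z => ‖P ω + Y (ω (e b₀))‖ ^ 2) (Measure.pi D) := by
    have := (memLp_two_iff_integrable_sq_norm hS.1).1 hS
    refine this.congr (.of_forall fun ω => ?_)
    simp only [hP]
    rw [sum_erase_add _ _ (mem_univ b₀)]
  have h2 : Integrable (fun p : E × Z => ‖p.1 + Y p.2‖ ^ 2)
      (((Measure.pi D).map P).prod (D (e b₀))) := by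
    rw [← hlaw]
    exact (integrable_map_measure hφ.aestronglyMeasurable hm.aemeasurable).2 h1
  obtain ⟨p, hp⟩ := h2.prod_right_ae.exists
  have h3 : MemLp (fun z => p + Y z) 2 (D (e b₀)) :=
    (memLp_two_iff_integrable_sq_norm (hY.const_add p).aestronglyMeasurable).2 hp
  exact (h3.sub (memLp_const p)).ae_eq (.of_forall fun z => by simp)

end SecondMoment

/-! ### Stepsizes, weights, and the scalar recursion -/

section Stepsizes

/-- Two-phase stepsizes: constant `1 / (4 H)` for `r ≤ T` (where the truncated difference `r - T`
vanishes), then `2 / (8 H + λ (r - T))`. -/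
noncomputable def stepSize (H lam : ℝ) (T r : ℕ) : ℝ := 2 / (8 * H + lam * ((r - T : ℕ) : ℝ))

/-- Averaging weights: zero during the first phase, and twice the inverse stepsize for
`T ≤ r < R`. The last iterate `r = R` gets weight zero, since the one-step inequality of round
`r` bounds the gap at the iterate entering that round. -/
noncomputable def weight (H lam : ℝ) (T R r : ℕ) : ℝ :=
  if T ≤ r ∧ r < R then 8 * H + lam * ((r - T : ℕ) : ℝ) else 0

variable {H lam : ℝ}

lemma stepSize_nonneg (hH : 0 < H) (hlam : 0 < lam) (T r : ℕ) : 0 ≤ stepSize H lam T r := by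
  unfold stepSize; positivity

lemma stepSize_le (hH : 0 < H) (hlam : 0 < lam) (T r : ℕ) :
    stepSize H lam T r ≤ 1 / (4 * H) := by
  unfold stepSize
  rw [div_le_div_iff₀ (by positivity) (by positivity)]
  have : 0 ≤ lam * ((r - T : ℕ) : ℝ) := by positivity
  linarith

lemma weight_nonneg (hH : 0 < H) (hlam : 0 < lam) (T R r : ℕ) : 0 ≤ weight H lam T R r := by
  unfold weight; split_ifs <;> positivity

/-- The sum over the iterates `1, …, R` is the sum over `T₁, …, R - 1`, as the remaining weights
vanish; `1 ≤ T₁` ensures that the initial point is not among the latter. -/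
lemma sum_weight_mul {T₁ T₂ : ℕ} (hT₁ : 1 ≤ T₁) (δ : ℕ → ℝ) :
    ∑ r : Fin (T₁ + T₂), weight H lam T₁ (T₁ + T₂) ((r : ℕ) + 1) * δ ((r : ℕ) + 1)
      = ∑ j ∈ range T₂, (8 * H + lam * j) * δ (T₁ + j) := by
  set h : ℕ → ℝ := fun r => weight H lam T₁ (T₁ + T₂) r * δ r with hh
  have h0 : ∀ r, r < T₁ → h r = 0 := fun r hr => by
    simp [hh, weight, not_le.2 hr]
  have hlast : h (T₁ + T₂) = 0 := by simp [hh, weight]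
  rw [Fin.sum_univ_eq_sum_range (fun r => h (r + 1))]
  have h1 := sum_range_succ' h (T₁ + T₂)
  rw [sum_range_succ, hlast, h0 0 hT₁, add_zero, add_zero] at h1
  rw [← h1, sum_range_add, sum_eq_zero fun r hr => h0 r (mem_range.1 hr), zero_add]
  refine sum_congr rfl fun j hj => ?_
  have : T₁ + j < T₁ + T₂ := by have := mem_range.1 hj; omega
  simp [hh, weight, mem_range.1 hj]

lemma sum_weight_eq {T₁ T₂ : ℕ} (hT₁ : 1 ≤ T₁) :
    ∑ r : Fin (T₁ + T₂), weight H lam T₁ (T₁ + T₂) ((r : ℕ) + 1)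
      = ∑ j ∈ range T₂, (8 * H + lam * (j : ℝ)) := by
  simpa using sum_weight_mul (H := H) (lam := lam) (T₂ := T₂) hT₁ fun _ => 1

lemma sum_weight_pos (hH : 0 < H) (hlam : 0 < lam) {T₁ T₂ : ℕ} (hT₁ : 1 ≤ T₁) (hT₂ : 1 ≤ T₂) :
    0 < ∑ r : Fin (T₁ + T₂), weight H lam T₁ (T₁ + T₂) ((r : ℕ) + 1) := by
  rw [sum_weight_eq hT₁]
  exact sum_pos (fun j _ => by positivity) (nonempty_range_iff.2 (by omega))

/-- The scalar recursion `A_{r+1} ≤ (1 - λη_r) A_r - η_r δ_r + c η_r²` under the two-phase stepsizes: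
the first phase contracts `A` geometrically down to the noise floor `c / (4 λ H)`, and the second
telescopes after multiplication by the squared inverse stepsize. -/
lemma two_phase_bound (hH : 0 < H) (hlam : 0 < lam) (hlamH : lam ≤ H) {c : ℝ} (hc : 0 ≤ c)
    {T₁ T₂ : ℕ} (hT₂ : 1 ≤ T₂) {A δ : ℕ → ℝ} (hA : ∀ r, 0 ≤ A r)
    (hδ : ∀ r, 0 ≤ δ r)
    (hrec : ∀ r, r < T₁ + T₂ → A (r + 1) ≤ (1 - lam * stepSize H lam T₁ r) * A r
      - stepSize H lam T₁ r * δ r + c * stepSize H lam T₁ r ^ 2) :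
    ∑ j ∈ range T₂, (8 * H + lam * j) * δ (T₁ + j)
      ≤ (∑ j ∈ range T₂, (8 * H + lam * (j : ℝ))) *
        (4 * H * Real.exp (-(lam * T₁) / (4 * H)) * A 0 / T₂ + 5 * c / (lam * T₂)) := by
  -- The constant `c / (4 λ H)` is the fixed point of the recursion with `η = 1 / (4 H)` and `δ = 0`.
  have phase1 : ∀ r, r ≤ T₁ → A r ≤ (1 - lam / (4 * H)) ^ r * A 0 + c / (4 * lam * H) := by
    have hq : 0 ≤ 1 - lam / (4 * H) := by
      rw [sub_nonneg, div_le_one (by positivity)]; linarith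
    intro r
    induction r with
    | zero => intro _; simp; positivity
    | succ r ih =>
      intro hr
      have h1 := hrec r (by omega)
      have hs : stepSize H lam T₁ r = 1 / (4 * H) := by
        rw [stepSize, Nat.sub_eq_zero_of_le (by omega)]
        field_simp; ring
      rw [hs] at h1
      have h2 : 0 ≤ 1 / (4 * H) * δ r := mul_nonneg (by positivity) (hδ r)
      have h3 := mul_le_mul_of_nonneg_left (ih (by omega)) hq
      rw [pow_succ]
      have e1 : lam * (1 / (4 * H)) = lam / (4 * H) := by ring
      rw [e1] at h1
      have e2 : (1 - lam / (4 * H)) * (c / (4 * lam * H)) + c * (1 / (4 * H)) ^ 2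
          = c / (4 * lam * H) := by field_simp; ring
      nlinarith
  -- With `p = 8 H + λ n`, multiplying the recursion by `p ^ 2 / 2` telescopes because
  -- `p ^ 2 - 2 λ p ≤ (p - λ) ^ 2`.
  have phase2 : ∀ n, n ≤ T₂ → ∑ j ∈ range n, (8 * H + lam * j) * δ (T₁ + j)
      + (8 * H + lam * n - lam) ^ 2 / 2 * A (T₁ + n)
      ≤ (8 * H - lam) ^ 2 / 2 * A T₁ + 2 * c * n := by
    intro n
    induction n with
    | zero => intro _; simp
    | succ n ih =>
      intro hn
      have h1 := hrec (T₁ + n) (by omega)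
      have ih := ih (by omega)
      rw [sum_range_succ]
      have hs : stepSize H lam T₁ (T₁ + n) = 2 / (8 * H + lam * n) := by
        simp [stepSize]
      rw [hs] at h1
      set p := 8 * H + lam * n with hp
      have hp0 : 0 < p := by positivity
      have h2 := mul_le_mul_of_nonneg_left h1 (by positivity : 0 ≤ p ^ 2 / 2)
      have e1 : p ^ 2 / 2 * ((1 - lam * (2 / p)) * A (T₁ + n) - 2 / p * δ (T₁ + n)
          + c * (2 / p) ^ 2) = (p ^ 2 - 2 * lam * p) / 2 * A (T₁ + n) - p * δ (T₁ + n) + 2 * c := by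
        field_simp
      rw [e1] at h2
      have e2 : 8 * H + lam * ((n + 1 : ℕ) : ℝ) - lam = p := by push_cast; ring
      rw [e2, ← add_assoc]
      have h3 : (p ^ 2 - 2 * lam * p) / 2 * A (T₁ + n) ≤ (p - lam) ^ 2 / 2 * A (T₁ + n) := by
        refine mul_le_mul_of_nonneg_right ?_ (hA _)
        nlinarith [sq_nonneg lam]
      push_cast
      linarith
  have hfin := phase2 T₂ le_rfl
  have hpos : 0 ≤ (8 * H + lam * T₂ - lam) ^ 2 / 2 * A (T₁ + T₂) :=
    mul_nonneg (by positivity) (hA _)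
  have hexp : (1 - lam / (4 * H)) ^ T₁ ≤ Real.exp (-(lam * T₁) / (4 * H)) := by
    have hq : 0 ≤ 1 - lam / (4 * H) := by
      rw [sub_nonneg, div_le_one (by positivity)]; linarith
    calc _ ≤ Real.exp (-(lam / (4 * H))) ^ T₁ := by
          gcongr; exact Real.one_sub_le_exp_neg _
      _ = _ := by rw [← Real.exp_nat_mul]; congr 1; ring
  set ex := Real.exp (-(lam * T₁) / (4 * H))
  have hAT : A T₁ ≤ ex * A 0 + c / (4 * lam * H) :=
    (phase1 T₁ le_rfl).trans (by gcongr; exact hA 0)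
  have hT₂' : (1 : ℝ) ≤ T₂ := by exact_mod_cast hT₂
  have hWeq : ∀ n : ℕ, ∑ j ∈ range n, (8 * H + lam * (j : ℝ))
      = 8 * H * n + lam * n * (n - 1) / 2 := by
    intro n
    induction n with
    | zero => simp
    | succ n ih => rw [sum_range_succ, ih]; push_cast; ring
  set W := ∑ j ∈ range T₂, (8 * H + lam * (j : ℝ)) with hW
  have hW1 : 8 * H * T₂ ≤ W := by
    rw [hW, hWeq]
    have : 0 ≤ lam * T₂ * ((T₂ : ℝ) - 1) / 2 := by
      have : (0 : ℝ) ≤ (T₂ : ℝ) - 1 := by linarith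
      positivity
    linarith
  have hW2 : lam * T₂ ^ 2 / 2 ≤ W := by
    rw [hW, hWeq]
    nlinarith
  have hsq : (8 * H - lam) ^ 2 / 2 ≤ 32 * H ^ 2 := by nlinarith
  have hA0 := hA 0
  have hex : 0 < ex := Real.exp_pos _
  calc _ ≤ (8 * H - lam) ^ 2 / 2 * A T₁ + 2 * c * T₂ := by linarith
    _ ≤ 32 * H ^ 2 * (ex * A 0 + c / (4 * lam * H)) + 2 * c * T₂ := by
        gcongr
        exact hA _
    _ = 8 * H * T₂ * (4 * H * ex * A 0 / T₂ + c / (lam * T₂))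
        + lam * T₂ ^ 2 / 2 * (4 * c / (lam * T₂)) := by
        have : (T₂ : ℝ) ≠ 0 := by positivity
        field_simp
        ring
    _ ≤ W * (4 * H * ex * A 0 / T₂ + c / (lam * T₂)) + W * (4 * c / (lam * T₂)) := by gcongr
    _ = _ := by ring

end Stepsizes

/-! ### The averaged iterate with square-integrable gradients at the optimum -/

section Iterates

variable {Z E : Type*} [MeasurableSpace Z] [NormedAddCommGroup E] [InnerProductSpace ℝ E]
  [MeasurableSpace E] [BorelSpace E] [SecondCountableTopology E] {R M K : ℕ}

/-- The iterate `x r` is measurable and does not depend on the samples of rounds `r, r + 1, …`. -/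
lemma measurable_iterate_and_update {G : E → Z → E} (hG : Measurable fun p : E × Z => G p.1 p.2)
    {η : ℕ → ℝ} {x : ℕ → ((Fin R × Fin M × Fin K) → Z) → E} (hx0 : ∀ ω, x 0 ω = 0)
    (hx : ∀ (r : Fin R) ω, x ((r : ℕ) + 1) ω = x (r : ℕ) ω -
      η (r : ℕ) • (((M : ℝ) * (K : ℝ))⁻¹ • ∑ m : Fin M, ∑ k : Fin K,
        G (x (r : ℕ) ω) (ω (r, m, k)))) (r : ℕ) (hr : r ≤ R) :
    Measurable (x r) ∧ ∀ r' : Fin R, r ≤ r' → ∀ m k ω z,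
      x r (Function.update ω (r', m, k) z) = x r ω := by
  induction r with
  | zero =>
    refine ⟨?_, fun r' _ m k ω z => by rw [hx0, hx0]⟩
    rw [show x 0 = fun _ => 0 from funext hx0]
    exact measurable_const
  | succ r ih =>
    obtain ⟨ih1, ih2⟩ := ih (by omega)
    have e := hx ⟨r, by omega⟩
    simp only at e
    constructor
    · rw [show x (r + 1) = _ from funext e]
      refine ih1.sub (Measurable.const_smul (Measurable.const_smul ?_ _) _)
      refine Finset.measurable_fun_sum _ fun m _ => Finset.measurable_fun_sum _ fun k _ => ?_
      exact hG.comp (ih1.prodMk (measurable_pi_apply _))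
    · intro r' hr' m k ω z
      rw [e, e, ih2 r' (by omega)]
      congr 3
      refine sum_congr rfl fun m' _ => sum_congr rfl fun k' _ => ?_
      rw [Function.update_of_ne]
      intro h
      have : r = r' := congrArg (fun p => (p.1 : ℕ)) h
      omega

/-- The convergence rate under two-phase stepsizes, when the stochastic gradients at the optimum are
square-integrable: Jensen passes from the average of the gaps to the gap of the average. -/
lemma two_phase_expected_gap_le [CompleteSpace E] {T₁ T₂ : ℕ} (hT₁ : 1 ≤ T₁) (hT₂ : 1 ≤ T₂)
    (hM : 1 ≤ M) (hK : 1 ≤ K)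
    {H lam σ : ℝ} (hH : 0 < H) (hlam : 0 < lam) (hlamH : lam ≤ H)
    (D : Fin M → Measure Z) [∀ m, IsProbabilityMeasure (D m)]
    {f : E → Z → ℝ} {G : E → Z → E}
    (hf : ∀ z, SmoothConvexWith H (fun x => f x z) (fun x => G x z))
    (hG : ∀ x, Measurable (G x)) (hfi : ∀ m x, Integrable (f x) (D m))
    (hGi : ∀ m x, Integrable (G x) (D m)) {xs : E} (hGs : ∀ m, MemLp (G xs) 2 (D m))
    (hsc : ∀ m x, ∫ z, f x z ∂(D m) + ⟪∫ z, G x z ∂(D m), xs - x⟫ + lam / 2 * ‖x - xs‖ ^ 2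
      ≤ ∫ z, f xs z ∂(D m))
    {F : E → ℝ} (hF : ∀ x, F x = (M : ℝ)⁻¹ * ∑ m, ∫ z, f x z ∂(D m))
    (hmin : ∀ y, F xs ≤ F y)
    (hvar : ∀ m, ∫ z, ‖G xs z - ∫ z, G xs z ∂(D m)‖ ^ 2 ∂(D m) ≤ σ ^ 2)
    {x : ℕ → ((Fin (T₁ + T₂) × Fin M × Fin K) → Z) → E} (hx0 : ∀ ω, x 0 ω = 0)
    (hx : ∀ (r : Fin (T₁ + T₂)) ω, x ((r : ℕ) + 1) ω = x (r : ℕ) ω -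
      stepSize H lam T₁ r • (((M : ℝ) * (K : ℝ))⁻¹ • ∑ m : Fin M, ∑ k : Fin K,
        G (x (r : ℕ) ω) (ω (r, m, k))))
    (hFint : Integrable (fun ω =>
      F ((∑ r : Fin (T₁ + T₂), weight H lam T₁ (T₁ + T₂) ((r : ℕ) + 1))⁻¹ •
        ∑ r : Fin (T₁ + T₂), weight H lam T₁ (T₁ + T₂) ((r : ℕ) + 1) • x ((r : ℕ) + 1) ω))
      (Measure.pi fun i : Fin (T₁ + T₂) × Fin M × Fin K => D i.2.1)) :
    (∫ ω, F ((∑ r : Fin (T₁ + T₂), weight H lam T₁ (T₁ + T₂) ((r : ℕ) + 1))⁻¹ •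
        ∑ r : Fin (T₁ + T₂), weight H lam T₁ (T₁ + T₂) ((r : ℕ) + 1) • x ((r : ℕ) + 1) ω)
        ∂(Measure.pi fun i : Fin (T₁ + T₂) × Fin M × Fin K => D i.2.1)) - F xs
      ≤ 4 * H * Real.exp (-(lam * T₁) / (4 * H)) * ‖xs‖ ^ 2 / T₂
        + 10 * σ ^ 2 / (lam * M * K * T₂) := by
  have hM0 : (0 : ℝ) < M := by exact_mod_cast hM
  have hK0 : (0 : ℝ) < K := by exact_mod_cast hK
  have : Nonempty (Fin M) := ⟨⟨0, hM⟩⟩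
  have : Nonempty (Fin K) := ⟨⟨0, hK⟩⟩
  set D' : Fin (T₁ + T₂) × Fin M × Fin K → Measure Z := fun i => D i.2.1 with hD'
  have hD'p : ∀ i, IsProbabilityMeasure (D' i) := fun i => inferInstanceAs
    (IsProbabilityMeasure (D i.2.1))
  set μ := Measure.pi D' with hμ
  have hGu := measurable_uncurry_grad hH hf hG
  have hFs : SmoothConvexWith H F (fun x => (M : ℝ)⁻¹ • ∑ m, ∫ z, G x z ∂(D m)) := by
    have := SmoothConvexWith.mean fun m => integral_smoothConvexWith (D m) hf (hfi m) (hGi m)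
    rw [Fintype.card_fin] at this
    rwa [show F = _ from funext hF]
  have hgrad0 := hFs.grad_eq_zero_of_forall_le hH hmin
  have hzero : ∑ m, ∫ z, G xs z ∂(D m) = 0 := by
    simpa [hM0.ne'] using hgrad0
  have hgap : ∀ y, |F y - F xs| ≤ H / 2 * ‖y - xs‖ ^ 2 := fun y => by
    simpa [hgrad0] using hFs.abs_sub_le hH xs y
  have hcard : (Fintype.card (Fin M × Fin K) : ℝ) = M * K := by simp
  have hF' : ∀ y, ((M : ℝ) * K)⁻¹ * ∑ b : Fin M × Fin K, ∫ z, f y z ∂(D b.1) = F y := fun y => by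
    rw [hF, Fintype.sum_prod_type]
    simp only [sum_const, card_univ, Fintype.card_fin, nsmul_eq_mul, ← mul_sum]
    field_simp
  have hmeas := measurable_iterate_and_update hGu (η := stepSize H lam T₁) hx0 hx
  have hstep : ∀ r, r < T₁ + T₂ → MemLp (x r) 2 μ → MemLp (x (r + 1)) 2 μ ∧
      ∫ ω, ‖x (r + 1) ω - xs‖ ^ 2 ∂μ ≤ (1 - lam * stepSize H lam T₁ r) * ∫ ω, ‖x r ω - xs‖ ^ 2 ∂μ
        - stepSize H lam T₁ r * ∫ ω, (F (x r ω) - F xs) ∂μ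
        + 2 * σ ^ 2 / (M * K) * stepSize H lam T₁ r ^ 2 := fun r hr hL => by
    have hinj : Function.Injective
        (fun b : Fin M × Fin K => ((⟨r, hr⟩ : Fin (T₁ + T₂)), b)) := fun b b' h =>
      (Prod.mk.injEq _ _ _ _ ▸ h).2
    have h := integral_norm_sq_step_le D' (lam := lam) (σ := σ) hH
      (stepSize_nonneg hH hlam T₁ r) (stepSize_le hH hlam T₁ r) hf hG hinj
      (fun b => hfi b.1) (fun b => hGi b.1) xs (fun b => hGs b.1) (fun b => hsc b.1)
      (by rw [Fintype.sum_prod_type]; simp [hD', ← smul_sum, hzero])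
      (fun b => hvar b.1) (hmeas r hr.le).1 hL
      (fun b ω z => (hmeas r hr.le).2 ⟨r, hr⟩ le_rfl b.1 b.2 ω z)
    rw [hcard] at h
    simp only [hD', hF'] at h
    have e : ∀ ω, x r ω - stepSize H lam T₁ r • (((M : ℝ) * K)⁻¹ •
        ∑ b : Fin M × Fin K, G (x r ω) (ω (⟨r, hr⟩, b))) = x (r + 1) ω := fun ω => by
      rw [Fintype.sum_prod_type]
      exact (hx ⟨r, hr⟩ ω).symm
    simp only [e] at h
    exact h
  have hL : ∀ r, r ≤ T₁ + T₂ → MemLp (x r) 2 μ := by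
    intro r
    induction r with
    | zero =>
      intro _
      rw [show x 0 = fun _ => 0 from funext hx0]
      exact memLp_const _
    | succ r ih => exact fun hr => (hstep r hr (ih (by omega))).1
  have hgi : ∀ r, r ≤ T₁ + T₂ → Integrable (fun ω => F (x r ω) - F xs) μ := fun r hr => by
    have h1 : MemLp (fun ω => x r ω - xs) 2 μ := (hL r hr).sub (memLp_const _)
    refine (((memLp_two_iff_integrable_sq_norm h1.1).1 h1).const_mul (H / 2)).mono'
      (((hFs.continuous hH).measurable.comp (hmeas r hr).1).sub_const _).aestronglyMeasurable
      (.of_forall fun ω => hgap _)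
  set δ : ℕ → ℝ := fun r => ∫ ω, (F (x r ω) - F xs) ∂μ with hδ
  have hbound := two_phase_bound hH hlam hlamH (c := 2 * σ ^ 2 / (M * K)) (by positivity)
    (T₁ := T₁) hT₂ (A := fun r => ∫ ω, ‖x r ω - xs‖ ^ 2 ∂μ) (δ := δ)
    (fun r => integral_nonneg fun ω => by positivity)
    (fun r => integral_nonneg fun ω => sub_nonneg.2 (hmin _))
    (fun r hr => (hstep r hr (hL r hr.le)).2)
  have hsumW := sum_weight_eq (H := H) (lam := lam) (T₂ := T₂) hT₁
  have hWpos := sum_weight_pos (T₂ := T₂) hH hlam hT₁ hT₂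
  set w := weight H lam T₁ (T₁ + T₂) with hw
  set W := ∑ r : Fin (T₁ + T₂), w ((r : ℕ) + 1) with hW
  have hw0 : ∀ r, 0 ≤ w r := weight_nonneg hH hlam T₁ (T₁ + T₂)
  have hjensen : ∀ ω, F (W⁻¹ • ∑ r : Fin (T₁ + T₂), w ((r : ℕ) + 1) • x ((r : ℕ) + 1) ω) - F xs
      ≤ W⁻¹ * ∑ r : Fin (T₁ + T₂), w ((r : ℕ) + 1) * (F (x ((r : ℕ) + 1) ω) - F xs) := fun ω => by
    have h := hFs.convexOn.map_sum_le (t := univ)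
      (w := fun r : Fin (T₁ + T₂) => W⁻¹ * w ((r : ℕ) + 1))
      (p := fun r : Fin (T₁ + T₂) => x ((r : ℕ) + 1) ω)
      (fun r _ => mul_nonneg (by positivity) (hw0 _))
      (by rw [← mul_sum, ← hW, inv_mul_cancel₀ hWpos.ne']) (fun _ _ => Set.mem_univ _)
    simp only [mul_smul, ← smul_sum, smul_eq_mul, mul_assoc, ← mul_sum] at h
    have e : W⁻¹ * ∑ r : Fin (T₁ + T₂), w ((r : ℕ) + 1) * (F (x ((r : ℕ) + 1) ω) - F xs)
        = W⁻¹ * ∑ r : Fin (T₁ + T₂), w ((r : ℕ) + 1) * F (x ((r : ℕ) + 1) ω) - F xs := by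
      simp only [mul_sub, sum_sub_distrib, ← sum_mul, ← hW]
      rw [← mul_assoc, inv_mul_cancel₀ hWpos.ne', one_mul]
    rw [e]
    linarith
  have hgi' : ∀ r : Fin (T₁ + T₂), Integrable
      (fun ω => w ((r : ℕ) + 1) * (F (x ((r : ℕ) + 1) ω) - F xs)) μ := fun r =>
    (hgi _ r.2).const_mul _
  have h1 : (∫ ω, F (W⁻¹ • ∑ r : Fin (T₁ + T₂), w ((r : ℕ) + 1) • x ((r : ℕ) + 1) ω) ∂μ) - F xs
      ≤ W⁻¹ * ∑ r : Fin (T₁ + T₂), w ((r : ℕ) + 1) * δ ((r : ℕ) + 1) := by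
    calc _ = ∫ ω, (F (W⁻¹ • ∑ r : Fin (T₁ + T₂), w ((r : ℕ) + 1) • x ((r : ℕ) + 1) ω) - F xs) ∂μ := by
          rw [integral_sub hFint (integrable_const _)]; simp
      _ ≤ ∫ ω, W⁻¹ * ∑ r : Fin (T₁ + T₂), w ((r : ℕ) + 1) * (F (x ((r : ℕ) + 1) ω) - F xs) ∂μ :=
          integral_mono (hFint.sub (integrable_const _))
            ((integrable_finsetSum _ fun r _ => hgi' r).const_mul _) hjensen
      _ = _ := by
          rw [integral_const_mul, integral_finsetSum _ fun r _ => hgi' r]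
          simp only [integral_const_mul, hδ]
  refine h1.trans ?_
  rw [hw, sum_weight_mul hT₁, inv_mul_le_iff₀ hWpos, hsumW]
  refine hbound.trans_eq ?_
  have hA0 : ∫ ω, ‖x 0 ω - xs‖ ^ 2 ∂μ = ‖xs‖ ^ 2 := by simp [hx0]
  have hT₂0 : (0 : ℝ) < T₂ := by exact_mod_cast hT₂
  rw [hA0]
  congr 2
  field_simp
  ring

end Iterates

/-! ### Gradients at the optimum without second moment -/

section LastStep

variable {Z E : Type*} [MeasurableSpace Z] [NormedAddCommGroup E] [InnerProductSpace ℝ E]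
  [MeasurableSpace E] [BorelSpace E] [SecondCountableTopology E] {M K : ℕ}

/-- If all stepsizes but the last vanish, then integrability of `F` at the last iterate forces the
stochastic gradients at `xs` to be square-integrable on every machine: quadratic growth of `F` gives
the last iterate, hence the minibatch sum of gradients at the origin, a second moment. -/
lemma memLp_two_grad_of_integrable_last {R : ℕ} (hR : 1 ≤ R) (hM : 1 ≤ M) (hK : 1 ≤ K)
    {H lam : ℝ} (hH : 0 < H) (hlam : 0 < lam)
    (D : Fin M → Measure Z) [∀ m, IsProbabilityMeasure (D m)]
    {f : E → Z → ℝ} {G : E → Z → E}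
    (hf : ∀ z, SmoothConvexWith H (fun x => f x z) (fun x => G x z))
    (hG : ∀ x, Measurable (G x)) {F : E → ℝ} {xs v : E}
    (hgrowth : ∀ y, F xs + ⟪v, y - xs⟫ + lam / 2 * ‖xs - y‖ ^ 2 ≤ F y)
    {x : ℕ → ((Fin R × Fin M × Fin K) → Z) → E} (hx0 : ∀ ω, x 0 ω = 0)
    (hx : ∀ (r : Fin R) ω, x ((r : ℕ) + 1) ω = x (r : ℕ) ω -
      (if (r : ℕ) + 1 = R then 1 / (4 * H) else 0) •
        (((M : ℝ) * (K : ℝ))⁻¹ • ∑ m : Fin M, ∑ k : Fin K, G (x (r : ℕ) ω) (ω (r, m, k))))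
    (hFint : Integrable (fun ω => F (x R ω))
      (Measure.pi fun i : Fin R × Fin M × Fin K => D i.2.1)) (m₀ : Fin M) :
    MemLp (G xs) 2 (D m₀) := by
  have hM0 : (0 : ℝ) < M := by exact_mod_cast hM
  have hK0 : (0 : ℝ) < K := by exact_mod_cast hK
  obtain ⟨n, rfl⟩ : ∃ n, R = n + 1 := ⟨R - 1, by omega⟩
  have hzero : ∀ r, r ≤ n → ∀ ω, x r ω = 0 := by
    intro r
    induction r with
    | zero => exact fun _ ω => hx0 ω
    | succ r ih =>
      intro hr ω
      have h := hx ⟨r, by omega⟩ ω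
      simp only at h
      rw [h, if_neg (by omega), ih (by omega), zero_smul, sub_zero]
  set D' : Fin (n + 1) × Fin M × Fin K → Measure Z := fun i => D i.2.1 with hD'
  have hD'p : ∀ i, IsProbabilityMeasure (D' i) := fun i => inferInstanceAs
    (IsProbabilityMeasure (D i.2.1))
  set e : Fin M × Fin K → Fin (n + 1) × Fin M × Fin K := fun b => (Fin.last n, b) with he
  have hei : Function.Injective e := fun a b h => (Prod.mk.inj h).2
  set S : ((Fin (n + 1) × Fin M × Fin K) → Z) → E := fun ω => ∑ b, G 0 (ω (e b)) with hS
  have hSm : Measurable S := by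
    refine Finset.measurable_sum _ fun b _ => (hG 0).comp (measurable_pi_apply _)
  have hlast : ∀ ω, x (n + 1) ω = -((1 / (4 * H) * ((M : ℝ) * K)⁻¹) • S ω) := by
    intro ω
    have h := hx (Fin.last n) ω
    simp only [Fin.val_last, if_true, hzero n le_rfl ω] at h
    rw [h, zero_sub, smul_smul, hS]
    simp only [he, Fintype.sum_prod_type]
  have hxm : Measurable (x (n + 1)) := by
    rw [show x (n + 1) = _ from funext hlast]
    exact (hSm.const_smul _).neg
  -- quadratic growth of the objective turns integrability of its value into a second moment
  have hL2 : MemLp (fun ω => x (n + 1) ω - xs) 2 (Measure.pi D') := by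
    rw [memLp_two_iff_integrable_sq_norm (hxm.sub_const xs).aestronglyMeasurable]
    refine Integrable.mono' (g := fun ω => 4 / lam * (F (x (n + 1) ω) - F xs + ‖v‖ ^ 2 / lam))
      (((hFint.sub (integrable_const _)).add (integrable_const _)).const_mul _)
      ((hxm.sub_const xs).norm.pow_const 2).aestronglyMeasurable (ae_of_all _ fun ω => ?_)
    set y := x (n + 1) ω
    rw [Real.norm_eq_abs, abs_of_nonneg (by positivity)]
    have h1 := hgrowth y
    have h2 := (abs_le.1 (abs_real_inner_le_norm v (y - xs))).1
    rw [norm_sub_rev xs y] at h1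
    have h3 : ‖v‖ * ‖y - xs‖ ≤ lam / 4 * ‖y - xs‖ ^ 2 + ‖v‖ ^ 2 / lam := by
      have : 0 ≤ (lam / 2 * ‖y - xs‖ - ‖v‖) ^ 2 / lam := by positivity
      have e : (lam / 2 * ‖y - xs‖ - ‖v‖) ^ 2 / lam
        = lam / 4 * ‖y - xs‖ ^ 2 + ‖v‖ ^ 2 / lam - ‖v‖ * ‖y - xs‖ := by
        field_simp; ring
      linarith
    have h4 : lam / 4 * ‖y - xs‖ ^ 2 ≤ F y - F xs + ‖v‖ ^ 2 / lam := by linarith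
    calc ‖y - xs‖ ^ 2 = 4 / lam * (lam / 4 * ‖y - xs‖ ^ 2) := by field_simp
      _ ≤ _ := by gcongr
  have hSL : MemLp S 2 (Measure.pi D') := by
    have h := ((hL2.add (memLp_const xs)).const_smul (-(4 * H * ((M : ℝ) * K))))
    refine h.ae_eq (ae_of_all _ fun ω => ?_)
    simp only [Pi.smul_apply, Pi.add_apply, sub_add_cancel, hlast ω, smul_neg,
      smul_smul]
    rw [show -(4 * H * ((M : ℝ) * K)) * (1 / (4 * H) * ((M : ℝ) * K)⁻¹) = -1 by field_simp,
      neg_one_smul, neg_neg]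
  have h0 : MemLp (G 0) 2 (D m₀) :=
    memLp_two_of_memLp_two_sum D' hei (hG 0) hSL (m₀, ⟨0, hK⟩)
  have hdiff : MemLp (fun z => G xs z - G 0 z) 2 (D m₀) :=
    MemLp.of_bound ((hG xs).sub (hG 0)).aestronglyMeasurable (H * ‖xs - 0‖)
      (ae_of_all _ fun z => (hf z).lipschitz hH xs 0)
  refine (h0.add hdiff).ae_eq (ae_of_all _ fun z => ?_)
  simp

end LastStep

end MinibatchSGD

/-! ### The convergence theorem -/

/-- Minibatch SGD for heterogeneous strongly convex objectives: there exist
stepsizes `η_r ≤ 1/(4H)` and nonnegative averaging weights `w_r` such that the weighted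
average `x̂` of the minibatch SGD iterates (started at `0`) satisfies
`𝔼 F(x̂) - F⋆ ≤ 128 H ‖x⋆‖² exp(-λR/(8H)) + 72 σ⋆²/(λMKR)`. -/
theorem minibatch_sgd_strongly_convex_upper_bound
    (d M K R : ℕ) (hM : 1 ≤ M) (hK : 1 ≤ K) (hR : 1 ≤ R)
    (H lam Δ σs : ℝ) (hH : 0 < H) (hlam : 0 < lam) (hlamH : lam ≤ H) (hσs : 0 ≤ σs)
    (Z : Type*) [MeasurableSpace Z]
    (D : Fin M → Measure Z) [∀ m, IsProbabilityMeasure (D m)]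
    (f : EuclideanSpace ℝ (Fin d) → Z → ℝ)
    (hmeas : ∀ x : EuclideanSpace ℝ (Fin d), Measurable fun z => f x z)
    (hgradmeas : ∀ x : EuclideanSpace ℝ (Fin d),
      Measurable fun z => gradient (fun y => f y z) x)
    (hfint : ∀ (m : Fin M) (x : EuclideanSpace ℝ (Fin d)), Integrable (fun z => f x z) (D m))
    (Fm : Fin M → EuclideanSpace ℝ (Fin d) → ℝ)
    (hFm : ∀ m x, Fm m x = ∫ z, f x z ∂(D m))
    (F : EuclideanSpace ℝ (Fin d) → ℝ)
    (hF : ∀ x, F x = (M : ℝ)⁻¹ * ∑ m : Fin M, Fm m x)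
    -- strongly convex assumptions: `f(·;z)` is `H`-smooth and convex, `F_m` is `λ`-strongly
    -- convex, and the initial suboptimality is at most `Δ`
    (hsmooth : ∀ (z : Z) (x y : EuclideanSpace ℝ (Fin d)),
      f y z ≤ f x z + ⟪gradient (fun u => f u z) x, y - x⟫ + H / 2 * ‖x - y‖ ^ 2)
    (hconvex : ∀ z : Z, ConvexOn ℝ Set.univ fun x => f x z)
    (hsc : ∀ (m : Fin M) (x y : EuclideanSpace ℝ (Fin d)),
      Fm m y ≥ Fm m x + ⟪gradient (Fm m) x, y - x⟫ + lam / 2 * ‖x - y‖ ^ 2)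
    (xstar : EuclideanSpace ℝ (Fin d))
    (hmin : ∀ y, F xstar ≤ F y)
    (hΔ : F 0 - F xstar ≤ Δ)
    -- variance bound at the optimum
    (hvar : ∀ m : Fin M,
      ∫ z, ‖gradient (fun y => f y z) xstar - gradient (Fm m) xstar‖ ^ 2 ∂(D m) ≤ σs ^ 2)
    -- differentiation under the integral sign (implicit regularity)
    (hswap : ∀ (m : Fin M) (x : EuclideanSpace ℝ (Fin d)),
      gradient (Fm m) x = ∫ z, gradient (fun y => f y z) x ∂(D m))
    (μΩ : Measure ((Fin R × Fin M × Fin K) → Z))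
    (hμΩ : μΩ = Measure.pi fun i : Fin R × Fin M × Fin K => D i.2.1) :
    ∃ η w : ℕ → ℝ,
      (∀ r, 0 ≤ η r ∧ η r ≤ 1 / (4 * H)) ∧ (∀ r, 0 ≤ w r) ∧
      0 < ∑ r : Fin R, w ((r : ℕ) + 1) ∧
      ∀ x : ℕ → ((Fin R × Fin M × Fin K) → Z) → EuclideanSpace ℝ (Fin d),
        (∀ ω, x 0 ω = 0) →
        (∀ (r : Fin R) (ω : (Fin R × Fin M × Fin K) → Z),
          x ((r : ℕ) + 1) ω = x (r : ℕ) ω -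
            η (r : ℕ) • (((M : ℝ) * (K : ℝ))⁻¹ • ∑ m : Fin M, ∑ k : Fin K,
              gradient (fun y => f y (ω (r, m, k))) (x (r : ℕ) ω))) →
        Integrable (fun ω =>
          F ((∑ r : Fin R, w ((r : ℕ) + 1))⁻¹ •
            ∑ r : Fin R, w ((r : ℕ) + 1) • x ((r : ℕ) + 1) ω)) μΩ →
        (∫ ω, F ((∑ r : Fin R, w ((r : ℕ) + 1))⁻¹ •
            ∑ r : Fin R, w ((r : ℕ) + 1) • x ((r : ℕ) + 1) ω) ∂μΩ) - F xstar ≤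
          128 * H * ‖xstar‖ ^ 2 * Real.exp (-(lam * R) / (8 * H)) +
            72 * σs ^ 2 / (lam * M * K * R) := by
  classical
  subst hμΩ
  have hM0 : (0 : ℝ) < M := by exact_mod_cast hM
  have hK0 : (0 : ℝ) < K := by exact_mod_cast hK
  have : Nonempty (Fin M) := ⟨⟨0, hM⟩⟩
  set G : EuclideanSpace ℝ (Fin d) → Z → EuclideanSpace ℝ (Fin d) :=
    fun x z => gradient (fun y => f y z) x with hGdef
  have hf : ∀ z, MinibatchSGD.SmoothConvexWith H (fun x => f x z) (fun x => G x z) := fun z =>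
    MinibatchSGD.SmoothConvexWith.of_convexOn hH (hsmooth z) (hconvex z)
  have hG : ∀ x, Measurable (G x) := hgradmeas
  -- `hvar` is a bound on a Bochner integral, which is zero for a non-integrable integrand, so the
  -- second moment of the gradient at the optimum has to be addressed separately.
  by_cases hL2 : ∀ m, MemLp (G xstar) 2 (D m)
  · have hGi : ∀ m x, Integrable (G x) (D m) := by
      intro m x
      have h1 : Integrable (G xstar) (D m) := (hL2 m).integrable (by norm_num)
      have h2 : Integrable (fun z => G x z - G xstar z) (D m) :=
        Integrable.of_bound ((hG x).sub (hG xstar)).aestronglyMeasurable (H * ‖x - xstar‖)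
          (ae_of_all _ fun z => (hf z).lipschitz hH x xstar)
      exact (h2.add h1).congr (ae_of_all _ fun z => by simp)
    have hsc' : ∀ m x, ∫ z, f x z ∂(D m) + ⟪∫ z, G x z ∂(D m), xstar - x⟫
        + lam / 2 * ‖x - xstar‖ ^ 2 ≤ ∫ z, f xstar z ∂(D m) := by
      intro m x
      have h := hsc m x xstar
      rw [hswap m x, hFm, hFm] at h
      exact h
    have hF' : ∀ x, F x = (M : ℝ)⁻¹ * ∑ m, ∫ z, f x z ∂(D m) := by
      intro x
      simp only [hF x, hFm]
    have hvar' : ∀ m, ∫ z, ‖G xstar z - ∫ z, G xstar z ∂(D m)‖ ^ 2 ∂(D m) ≤ σs ^ 2 := by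
      intro m
      have h := hvar m
      rw [hswap m xstar] at h
      exact h
    rcases hR.eq_or_lt with rfl | hR2
    · -- a single round: the zero stepsize keeps the iterate at the origin, and smoothness suffices
      refine ⟨fun _ => 0, fun _ => 1, fun _ => ⟨le_rfl, by positivity⟩, fun _ => zero_le_one,
        by simp, fun x hx0 hx _ => ?_⟩
      have hx1 : ∀ ω, x 1 ω = 0 := by
        intro ω
        have h := hx 0 ω
        simpa [hx0 ω] using h
      have hgap : F 0 - F xstar ≤ H / 2 * ‖xstar‖ ^ 2 := by
        have hFs : MinibatchSGD.SmoothConvexWith H F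
            (fun x => (M : ℝ)⁻¹ • ∑ m, ∫ z, G x z ∂(D m)) := by
          have := MinibatchSGD.SmoothConvexWith.mean fun m =>
            MinibatchSGD.integral_smoothConvexWith (D m) hf (hfint m) (hGi m)
          rw [Fintype.card_fin] at this
          rwa [show F = _ from funext hF']
        have h0 := hFs.grad_eq_zero_of_forall_le hH hmin
        have h := hFs.abs_sub_le hH xstar 0
        rw [h0] at h
        simpa using (le_abs_self _).trans h
      have hexp : 1 / 2 ≤ Real.exp (-(lam * ((1 : ℕ) : ℝ)) / (8 * H)) := by
        have h := Real.add_one_le_exp (-(lam * ((1 : ℕ) : ℝ)) / (8 * H))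
        have : lam / (8 * H) ≤ 1 / 8 := by
          rw [div_le_div_iff₀ (by positivity) (by norm_num)]
          linarith
        have e : -(lam * ((1 : ℕ) : ℝ)) / (8 * H) = -(lam / (8 * H)) := by
          push_cast; ring
        rw [e] at h ⊢
        linarith
      have h72 : 0 ≤ 72 * σs ^ 2 / (lam * M * K * ((1 : ℕ) : ℝ)) := by positivity
      have hbig : H / 2 * ‖xstar‖ ^ 2
          ≤ 128 * H * ‖xstar‖ ^ 2 * Real.exp (-(lam * ((1 : ℕ) : ℝ)) / (8 * H)) := by
        have h0 : 0 ≤ H * ‖xstar‖ ^ 2 := by positivity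
        nlinarith [mul_le_mul_of_nonneg_left hexp h0]
      have hint0 : (fun ω => F ((∑ r : Fin 1, (1 : ℝ))⁻¹ •
          ∑ r : Fin 1, (1 : ℝ) • x ((r : ℕ) + 1) ω)) = fun _ => F 0 := by
        funext ω
        simp [hx1 ω]
      rw [hint0, integral_const]
      simp only [probReal_univ, one_smul]
      linarith
    · -- split the rounds into two phases of nearly equal length
      obtain ⟨T₁, T₂, hT₁, hT₂, rfl, h12, h23⟩ : ∃ T₁ T₂, 1 ≤ T₁ ∧ 1 ≤ T₂ ∧ R = T₁ + T₂ ∧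
          T₂ ≤ T₁ ∧ T₁ ≤ 2 * T₂ :=
        ⟨(R + 1) / 2, R / 2, by omega, by omega, by omega, by omega, by omega⟩
      refine ⟨MinibatchSGD.stepSize H lam T₁, MinibatchSGD.weight H lam T₁ (T₁ + T₂),
        fun r => ⟨MinibatchSGD.stepSize_nonneg hH hlam T₁ r,
          MinibatchSGD.stepSize_le hH hlam T₁ r⟩,
        MinibatchSGD.weight_nonneg hH hlam T₁ (T₁ + T₂),
        MinibatchSGD.sum_weight_pos hH hlam hT₁ hT₂, fun x hx0 hx hFint => ?_⟩
      refine (MinibatchSGD.two_phase_expected_gap_le hT₁ hT₂ hM hK hH hlam hlamH D hf hG hfint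
        hGi hL2 hsc' hF' hmin hvar' hx0 hx hFint).trans ?_
      have hT₂' : (1 : ℝ) ≤ T₂ := by exact_mod_cast hT₂
      have h12' : (T₂ : ℝ) ≤ T₁ := by exact_mod_cast h12
      have h23' : (T₁ : ℝ) ≤ 2 * T₂ := by exact_mod_cast h23
      have hexp : Real.exp (-(lam * T₁) / (4 * H))
          ≤ Real.exp (-(lam * ((T₁ + T₂ : ℕ) : ℝ)) / (8 * H)) := by
        rw [Real.exp_le_exp, div_le_div_iff₀ (by positivity) (by positivity)]
        push_cast
        have : 0 ≤ lam * H * (T₁ - T₂) := by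
          have := sub_nonneg.2 h12'
          positivity
        nlinarith
      gcongr ?_ + ?_
      · calc _ ≤ 4 * H * Real.exp (-(lam * T₁) / (4 * H)) * ‖xstar‖ ^ 2 :=
              div_le_self (by positivity) hT₂'
          _ ≤ 4 * H * Real.exp (-(lam * ((T₁ + T₂ : ℕ) : ℝ)) / (8 * H)) * ‖xstar‖ ^ 2 := by
              gcongr
          _ ≤ _ := by
              have : 0 ≤ H * ‖xstar‖ ^ 2
                * Real.exp (-(lam * ((T₁ + T₂ : ℕ) : ℝ)) / (8 * H)) := by positivity
              nlinarith
      · have hT₁' : (0 : ℝ) < T₁ := by exact_mod_cast hT₁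
        rw [div_le_div_iff₀ (by positivity) (by positivity)]
        push_cast
        have h0 : 0 ≤ σs ^ 2 * (lam * M * K) := by positivity
        have h1 : 10 * ((T₁ : ℝ) + T₂) ≤ 72 * T₂ := by linarith
        nlinarith [mul_le_mul_of_nonneg_left h1 h0]
  · push Not at hL2
    obtain ⟨m₀, hm₀⟩ := hL2
    -- The gradient at the optimum has infinite second moment on machine `m₀`. A single nonzero step,
    -- taken last, then makes `F` of the output non-integrable.
    have hsum : ∑ r : Fin R, (if (r : ℕ) + 1 = R then (1 : ℝ) else 0) = 1 := by
      rw [Finset.sum_eq_single ⟨R - 1, by omega⟩]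
      · simp only
        rw [if_pos (by omega)]
      · intro b _ hb
        exact if_neg fun h => hb (Fin.ext (by simp only; omega))
      · simp
    refine ⟨fun r => if r + 1 = R then 1 / (4 * H) else 0, fun r => if r = R then 1 else 0,
      fun r => ?_, fun r => ?_, by rw [hsum]; exact one_pos, fun x hx0 hx hFint => ?_⟩
    · dsimp only
      split_ifs
      · exact ⟨by positivity, le_rfl⟩
      · exact ⟨le_rfl, by positivity⟩
    · dsimp only
      split_ifs <;> norm_num
    · refine absurd ?_ hm₀
      have hout : ∀ ω, (∑ r : Fin R, (if (r : ℕ) + 1 = R then (1 : ℝ) else 0))⁻¹ •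
          ∑ r : Fin R, (if (r : ℕ) + 1 = R then (1 : ℝ) else 0) • x ((r : ℕ) + 1) ω = x R ω := by
        intro ω
        rw [hsum, inv_one, one_smul, Finset.sum_eq_single ⟨R - 1, by omega⟩]
        · simp only
          rw [if_pos (by omega), one_smul, Nat.sub_add_cancel hR]
        · intro b _ hb
          rw [if_neg fun h => hb (Fin.ext (by simp only; omega)), zero_smul]
        · simp
      simp only [hout] at hFint
      have hgrowth : ∀ y, F xstar + ⟪(M : ℝ)⁻¹ • ∑ m, gradient (Fm m) xstar, y - xstar⟫
          + lam / 2 * ‖xstar - y‖ ^ 2 ≤ F y := by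
        intro y
        have h := Finset.sum_le_sum fun m (_ : m ∈ Finset.univ) => hsc m xstar y
        simp only [Finset.sum_add_distrib, Finset.sum_const, Finset.card_univ, Fintype.card_fin,
          nsmul_eq_mul] at h
        rw [hF, hF, real_inner_smul_left, sum_inner]
        have h' := mul_le_mul_of_nonneg_left h (inv_nonneg.2 hM0.le)
        rw [mul_add, mul_add, inv_mul_cancel_left₀ hM0.ne'] at h'
        exact h'
      exact MinibatchSGD.memLp_two_grad_of_integrable_last hR hM hK hH hlam D hf hG hgrowth hx0 hx
        hFint m₀
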